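/- arXiv:2411.04070 — 3 statements merged into one kernel-verified Lean document; each statement's English description precedes it below -/
import Mathlib

section
/- Let κ be a (P,ρ)-kernel on a locally finite weakly ranked poset (P,ρ). Then for every pair s < t in P, the polynomial κ_{st}(x) is divisible by x − 1 in ℤ[x]. -/
/-!
Evaluation at `x = 1` does not see `rev`, so `k = κ(1)` satisfies `k² = δ` in the incidence algebra
of the coefficient ring. Since `k` is `1` on the diagonal, the two endpoint terms of `(k²)_{st} = 0`
add up to `2 k_{st}`, while the other terms `k_{sw} k_{wt}` vanish by induction on the length of the
interval. As `2` is cancellable, `k_{st} = 0` for `s < t`.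
-/

open Finset Polynomial
open scoped Classical

noncomputable section

variable {α : Type*}

/-- Convolution product in the incidence algebra of a locally finite poset over `ℤ[x]`.
Only the values on intervals `s ≤ t` are relevant. -/
def conv [PartialOrder α] [LocallyFiniteOrder α] (a b : α → α → Polynomial ℤ) :
    α → α → Polynomial ℤ :=
  fun s t => ∑ w ∈ Finset.Icc s t, a s w * b w t

/-- The identity `δ` of the incidence algebra. -/
def dlt [PartialOrder α] : α → α → Polynomial ℤ :=
  fun s t => if s = t then 1 else 0

/-- The involution `a ↦ a^rev`, given by `(a^rev)_{st}(x) = x^{ρ_{st}} a_{st}(1/x)`. -/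
def rev (ρ : α → α → ℕ) (a : α → α → Polynomial ℤ) : α → α → Polynomial ℤ :=
  fun s t => (a s t).reflect (ρ s t)

/-- A weak rank function on a poset. -/
structure IsWeakRank [Preorder α] (ρ : α → α → ℕ) : Prop where
  pos : ∀ ⦃s t : α⦄, s < t → 0 < ρ s t
  add : ∀ ⦃s w t : α⦄, s ≤ w → w ≤ t → ρ s t = ρ s w + ρ w t

/-- `κ` is a `(P,ρ)`-kernel: it lies in `I_ρ(P)`, is `1` on the diagonal, and `κ⁻¹ = κ^rev`. -/
structure IsKernel [PartialOrder α] [LocallyFiniteOrder α] (ρ : α → α → ℕ)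
    (κ : α → α → Polynomial ℤ) : Prop where
  degLE : ∀ ⦃s t : α⦄, s ≤ t → (κ s t).natDegree ≤ ρ s t
  diag : ∀ s : α, κ s s = 1
  left : ∀ ⦃s t : α⦄, s ≤ t → conv (rev ρ κ) κ s t = dlt s t
  right : ∀ ⦃s t : α⦄, s ≤ t → conv κ (rev ρ κ) s t = dlt s t

/-- The reduced kernel `κ̄`: `κ̄_{st} = κ_{st}/(x-1)` for `s < t` and `κ̄_{ss} = -1`. -/
def red [PartialOrder α] (κ : α → α → Polynomial ℤ) : α → α → Polynomial ℤ :=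
  fun s t => if s = t then -1 else κ s t /ₘ (X - 1)

/-- `H` is the Chow function of `κ`, i.e. `H = -(κ̄)⁻¹`. -/
structure IsChow [PartialOrder α] [LocallyFiniteOrder α] (κ H : α → α → Polynomial ℤ) : Prop where
  left : ∀ ⦃s t : α⦄, s ≤ t → conv (red κ) H s t = -dlt s t
  right : ∀ ⦃s t : α⦄, s ≤ t → conv H (red κ) s t = -dlt s t

/-- `f` is the right KLS function of the kernel `κ`. -/
structure IsRightKLS [PartialOrder α] [LocallyFiniteOrder α] (ρ : α → α → ℕ)
    (κ f : α → α → Polynomial ℤ) : Prop where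
  diag : ∀ s : α, f s s = 1
  degLT : ∀ ⦃s t : α⦄, s < t → 2 * (f s t).natDegree < ρ s t
  rev_eq : ∀ ⦃s t : α⦄, s ≤ t → rev ρ f s t = conv κ f s t

/-- `g` is the left KLS function of the kernel `κ`. -/
structure IsLeftKLS [PartialOrder α] [LocallyFiniteOrder α] (ρ : α → α → ℕ)
    (κ g : α → α → Polynomial ℤ) : Prop where
  diag : ∀ s : α, g s s = 1
  degLT : ∀ ⦃s t : α⦄, s < t → 2 * (g s t).natDegree < ρ s t
  rev_eq : ∀ ⦃s t : α⦄, s ≤ t → rev ρ g s t = conv g κ s t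

/-- `p` is symmetric with center of symmetry `d/2`, i.e. `p(x) = x^d p(1/x)`. -/
def PolySymm (d : ℕ) (p : Polynomial ℤ) : Prop := p.natDegree ≤ d ∧ p.reflect d = p

/-- All coefficients of `p` are non-negative. -/
def PolyNonneg (p : Polynomial ℤ) : Prop := ∀ n, 0 ≤ p.coeff n

/-- The coefficient sequence of `p` is unimodal. -/
def PolyUnimodal (p : Polynomial ℤ) : Prop :=
  ∃ j, (∀ i < j, p.coeff i ≤ p.coeff (i + 1)) ∧ ∀ i, j ≤ i → p.coeff (i + 1) ≤ p.coeff i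

end

section

variable {R : Type*}

theorem eval_one_reflect [CommSemiring R] {p : R[X]} {N : ℕ} (hp : p.natDegree ≤ N) :
    (p.reflect N).eval 1 = p.eval 1 := by
  let _ : Invertible (1 : R) := invertibleOne
  simpa [eval₂_id] using eval₂_reflect_mul_pow (RingHom.id R) 1 N p hp

variable [PartialOrder α] [LocallyFiniteOrder α]

theorem sum_Icc_eq_add_of_lt {M : Type*} [AddCommMonoid M] {f : α → M} {s t : α} (hst : s < t)
    (hf : ∀ w, s < w → w < t → f w = 0) :
    ∑ w ∈ Icc s t, f w = f s + f t := by
  refine sum_eq_add_of_mem s t (left_mem_Icc.2 hst.le) (right_mem_Icc.2 hst.le) hst.ne ?_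
  rintro w hw ⟨hws, hwt⟩
  obtain ⟨hsw, hwt'⟩ := mem_Icc.1 hw
  exact hf w (hsw.lt_of_ne' hws) (hwt'.lt_of_ne hwt)

theorem eq_zero_of_sum_Icc_mul_self_eq_zero [NonAssocSemiring R] (h2 : IsLeftRegular (2 : R))
    {k : α → α → R} (hdiag : ∀ s, k s s = 1)
    (hsq : ∀ ⦃s t : α⦄, s < t → ∑ w ∈ Icc s t, k s w * k w t = 0) {s t : α} (hst : s < t) :
    k s t = 0 := by
  induction hI : Icc s t using Finset.strongInduction generalizing t with
  | H I ih =>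
    subst hI
    have interior : ∀ w, s < w → w < t → k s w * k w t = 0 := fun w hsw hwt ↦ by
      rw [ih (Icc s w) (Icc_ssubset_Icc_right hst.le le_rfl hwt) hsw rfl, zero_mul]
    refine h2 ?_
    calc 2 * k s t = k s s * k s t + k s t * k t t := by
          rw [hdiag, hdiag, one_mul, mul_one, two_mul]
      _ = ∑ w ∈ Icc s t, k s w * k w t := (sum_Icc_eq_add_of_lt hst interior).symm
      _ = 2 * 0 := by rw [hsq hst, mul_zero]

theorem kernel_dvd_X_sub_one_general [CommRing R] (h2 : IsLeftRegular (2 : R))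
    {ρ : α → α → ℕ} {κ : α → α → R[X]}
    (hdeg : ∀ ⦃s t : α⦄, s ≤ t → (κ s t).natDegree ≤ ρ s t) (hdiag : ∀ s, κ s s = 1)
    (hinv : ∀ ⦃s t : α⦄, s < t → ∑ w ∈ Icc s t, κ s w * (κ w t).reflect (ρ w t) = 0)
    {s t : α} (hst : s < t) :
    X - 1 ∣ κ s t := by
  rw [← C_1, dvd_iff_isRoot]
  refine eq_zero_of_sum_Icc_mul_self_eq_zero (k := fun s t ↦ (κ s t).eval 1) h2
    (fun s ↦ by rw [hdiag, eval_one]) (fun s t hlt ↦ ?_) hst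
  calc ∑ w ∈ Icc s t, (κ s w).eval 1 * (κ w t).eval 1
      = ∑ w ∈ Icc s t, (κ s w).eval 1 * ((κ w t).reflect (ρ w t)).eval 1 :=
        sum_congr rfl fun w hw ↦ by rw [eval_one_reflect (hdeg (mem_Icc.1 hw).2)]
    _ = (∑ w ∈ Icc s t, κ s w * (κ w t).reflect (ρ w t)).eval 1 := by
        simp only [eval_finsetSum, eval_mul]
    _ = 0 := by rw [hinv hlt, eval_zero]

end

/-- Lemma 3.1: for a `(P,ρ)`-kernel `κ` on a locally finite weakly ranked poset, the polynomial
`κ_{st}(x)` is divisible by `x - 1` for every `s < t`. -/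
theorem kernel_dvd_X_sub_one [PartialOrder α] [LocallyFiniteOrder α]
    (ρ : α → α → ℕ) (hρ : IsWeakRank ρ)
    (κ : α → α → Polynomial ℤ) (hκ : IsKernel ρ κ)
    (s t : α) (hst : s < t) :
    (X - 1 : Polynomial ℤ) ∣ κ s t :=
  kernel_dvd_X_sub_one_general (mul_right_injective₀ two_ne_zero) hκ.degLE hκ.diag
    (fun _ _ hlt ↦ (hκ.right hlt.le).trans (if_neg hlt.ne)) hst
end

section
/- Let κ be a (P,ρ)-kernel on a locally finite weakly ranked poset (P,ρ) and let ℋ be the associated Chow function. Then for every s < t in P, the coefficient of x^{ρ_{st}−1} in ℋ_{st}(x) equals the coefficient of x^{ρ_{st}} in κ_{st}(x). In particular, if κ is non-degenerate (i.e. deg κ_{st} = ρ_{st} for every s ≤ t), then deg ℋ_{st}(x) = ρ_{st} − 1 for every s < t. -/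
open Finset Polynomial
open scoped Classical

/-!
Write `κ̄ = b - δ`, so that `ℋ = (δ - b)⁻¹` satisfies
`ℋ_{st} = b_{st} + ∑_{s<w<t} b_{sw} ℋ_{wt}` for `s < t`. Division by `x - 1` gives
`deg b_{st} ≤ ρ_{st} - 1`, and induction on `ρ_{st}` gives `deg ℋ_{st} ≤ ρ_{st} - 1`. As `ρ` is
additive, the terms with `s < w < t` then have degree at most `ρ_{st} - 2`, so only `b_{st}`
contributes to the coefficient of `x^{ρ_{st}-1}` in `ℋ_{st}`.
-/

theorem coeff_divByMonic_of_natDegree_le {R : Type*} [Ring R] {p q : R[X]} {n : ℕ}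
    (hq : q.Monic) (hp : p.natDegree ≤ n + q.natDegree) :
    (p /ₘ q).coeff n = p.coeff (n + q.natDegree) := by
  nontriviality R
  have hquot : (p /ₘ q).natDegree ≤ n := by
    rw [natDegree_divByMonic p hq]
    omega
  have hrem : (p %ₘ q).coeff (n + q.natDegree) = 0 :=
    coeff_eq_zero_of_degree_lt <| (degree_modByMonic_lt p hq).trans_le <|
      degree_le_natDegree.trans <| Nat.cast_le.2 <| Nat.le_add_left _ _
  symm
  calc p.coeff (n + q.natDegree)
      = (p %ₘ q + q * (p /ₘ q)).coeff (n + q.natDegree) := by rw [modByMonic_add_div]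
    _ = (q * (p /ₘ q)).coeff (q.natDegree + n) := by rw [coeff_add, hrem, zero_add, add_comm]
    _ = (p /ₘ q).coeff n := by
      rw [coeff_mul_add_eq_of_natDegree_le le_rfl hquot, hq.coeff_natDegree, one_mul]

section Recursion

variable {α R : Type*} [Preorder α] {ρ : α → α → ℕ}

theorem IsWeakRank.lt_of_lt_of_le (hρ : IsWeakRank ρ) {s w t : α} (hsw : s < w) (hwt : w ≤ t) :
    ρ w t < ρ s t := by
  rw [hρ.add hsw.le hwt]
  exact Nat.lt_add_of_pos_left (hρ.pos hsw)

variable [Semiring R]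

theorem IsWeakRank.natDegree_mul_lt (hρ : IsWeakRank ρ) {s w t : α} (hsw : s < w) (hwt : w < t)
    {p q : R[X]} (hp : p.natDegree ≤ ρ s w - 1) (hq : q.natDegree ≤ ρ w t - 1) :
    (p * q).natDegree < ρ s t - 1 := by
  have hmul : (p * q).natDegree ≤ (ρ s w - 1) + (ρ w t - 1) := natDegree_mul_le_of_le hp hq
  have hsw_pos := hρ.pos hsw
  have hwt_pos := hρ.pos hwt
  have hadd := hρ.add hsw.le hwt.le
  omega

variable [LocallyFiniteOrder α]

/-- The recursion for the off-diagonal values of the inverse `H = (δ - b)⁻¹` in an incidence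
algebra, where `b` is strictly upper triangular: only the values `b s t` with `s < t` enter, and
`H s s = 1` has been substituted. For `b_{st} = κ_{st}/(x-1)` this is the recursion of the Chow
function of `κ`. -/
def IsChowRecursion (b H : α → α → R[X]) : Prop :=
  ∀ ⦃s t : α⦄, s < t → H s t = b s t + ∑ w ∈ Ioo s t, b s w * H w t

namespace IsChowRecursion

variable {b H : α → α → R[X]}

theorem natDegree_le (hH : IsChowRecursion b H) (hρ : IsWeakRank ρ)
    (hb : ∀ ⦃s t : α⦄, s < t → (b s t).natDegree ≤ ρ s t - 1) {s t : α} (hst : s < t) :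
    (H s t).natDegree ≤ ρ s t - 1 := by
  induction hn : ρ s t using Nat.strong_induction_on generalizing s with
  | _ n ih =>
    subst hn
    rw [hH hst]
    refine natDegree_add_le_of_degree_le (hb hst) (natDegree_sum_le_of_forall_le _ _ fun w hw => ?_)
    obtain ⟨hsw, hwt⟩ := mem_Ioo.1 hw
    exact (hρ.natDegree_mul_lt hsw hwt (hb hsw)
      (ih _ (hρ.lt_of_lt_of_le hsw hwt.le) hwt rfl)).le

theorem coeff_rank_sub_one (hH : IsChowRecursion b H) (hρ : IsWeakRank ρ)
    (hb : ∀ ⦃s t : α⦄, s < t → (b s t).natDegree ≤ ρ s t - 1) {s t : α} (hst : s < t) :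
    (H s t).coeff (ρ s t - 1) = (b s t).coeff (ρ s t - 1) := by
  rw [hH hst, coeff_add, finsetSum_coeff, sum_eq_zero, add_zero]
  intro w hw
  obtain ⟨hsw, hwt⟩ := mem_Ioo.1 hw
  exact coeff_eq_zero_of_natDegree_lt
    (hρ.natDegree_mul_lt hsw hwt (hb hsw) (hH.natDegree_le hρ hb hwt))

end IsChowRecursion

end Recursion

section ChowFunction

variable {α : Type*} [PartialOrder α]

theorem red_self (κ : α → α → ℤ[X]) (s : α) : red κ s s = -1 :=
  if_pos rfl

theorem red_of_lt (κ : α → α → ℤ[X]) {s t : α} (hst : s < t) :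
    red κ s t = κ s t /ₘ (X - 1) :=
  if_neg hst.ne

variable [LocallyFiniteOrder α]

theorem conv_of_lt (a b : α → α → ℤ[X]) {s t : α} (hst : s < t) :
    conv a b s t = a s s * b s t + (a s t * b t t + ∑ w ∈ Ioo s t, a s w * b w t) := by
  rw [conv, ← add_sum_Ioc_eq_sum_Icc hst.le, ← add_sum_Ioo_eq_sum_Ioc hst]

namespace IsChow

variable {κ H : α → α → ℤ[X]}

theorem apply_self (hH : IsChow κ H) (s : α) : H s s = 1 := by
  simpa [conv, dlt, red_self] using hH.left (le_refl s)

theorem isChowRecursion (hH : IsChow κ H) :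
    IsChowRecursion (fun s t => κ s t /ₘ (X - 1)) H := by
  intro s t hst
  have hsum : ∑ w ∈ Ioo s t, red κ s w * H w t = ∑ w ∈ Ioo s t, κ s w /ₘ (X - 1) * H w t :=
    sum_congr rfl fun w hw => by rw [red_of_lt κ (mem_Ioo.1 hw).1]
  have hleft : conv (red κ) H s t = 0 := by
    rw [hH.left hst.le, dlt, if_neg hst.ne, neg_zero]
  rw [conv_of_lt _ _ hst, red_self, red_of_lt κ hst, hH.apply_self, hsum] at hleft
  linear_combination -hleft

end IsChow

end ChowFunction

theorem chow_top_coeff_general {α R : Type*} [Ring R] [Preorder α] [LocallyFiniteOrder α]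
    {ρ : α → α → ℕ} (hρ : IsWeakRank ρ) {q : R[X]} (hq : q.Monic) (hq_deg : q.natDegree = 1)
    {κ H : α → α → R[X]} (hκ : ∀ ⦃s t : α⦄, s < t → (κ s t).natDegree ≤ ρ s t)
    (hH : IsChowRecursion (fun s t => κ s t /ₘ q) H) {s t : α} (hst : s < t) :
    (H s t).coeff (ρ s t - 1) = (κ s t).coeff (ρ s t) ∧
      ((κ s t).natDegree = ρ s t → (H s t).natDegree = ρ s t - 1) := by
  have hquot : ∀ ⦃u v : α⦄, u < v → (κ u v /ₘ q).natDegree ≤ ρ u v - 1 := fun u v huv => by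
    rw [natDegree_divByMonic _ hq, hq_deg]
    exact Nat.sub_le_sub_right (hκ huv) 1
  have hρ_pred : ρ s t - 1 + q.natDegree = ρ s t := by
    rw [hq_deg, Nat.sub_add_cancel (hρ.pos hst)]
  have hcoeff : (H s t).coeff (ρ s t - 1) = (κ s t).coeff (ρ s t) := by
    rw [hH.coeff_rank_sub_one hρ hquot hst,
      coeff_divByMonic_of_natDegree_le hq (by rw [hρ_pred]; exact hκ hst), hρ_pred]
  refine ⟨hcoeff, fun hdeg => natDegree_eq_of_le_of_coeff_ne_zero
    (hH.natDegree_le hρ hquot hst) ?_⟩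
  have hκ_ne : κ s t ≠ 0 := ne_zero_of_natDegree_gt (hdeg ▸ hρ.pos hst)
  rwa [hcoeff, ← hdeg, coeff_natDegree, leadingCoeff_ne_zero]

/-- Proposition 3.4(i): for the Chow function `ℋ` of a kernel `κ`,
`[x^{ρ_{st}-1}] ℋ_{st}(x) = [x^{ρ_{st}}] κ_{st}(x)` for all `s < t`; in particular if `κ` is
non-degenerate then `deg ℋ_{st} = ρ_{st} - 1` for all `s < t`. -/
theorem chow_top_coeff [PartialOrder α] [LocallyFiniteOrder α]
    (ρ : α → α → ℕ) (hρ : IsWeakRank ρ)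
    (κ : α → α → Polynomial ℤ) (hκ : IsKernel ρ κ)
    (H : α → α → Polynomial ℤ) (hH : IsChow κ H) :
    (∀ s t : α, s < t → (H s t).coeff (ρ s t - 1) = (κ s t).coeff (ρ s t)) ∧
    ((∀ s t : α, s ≤ t → (κ s t).natDegree = ρ s t) →
      ∀ s t : α, s < t → (H s t).natDegree = ρ s t - 1) := by
  have hgen {s t : α} (hst : s < t) :=
    chow_top_coeff_general hρ (monic_X_sub_C 1) (natDegree_X_sub_C 1)
      (fun _ _ huv => hκ.degLE huv.le) (by simpa only [C_1] using hH.isChowRecursion) hst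
  exact ⟨fun s t hst => (hgen hst).1, fun hdeg s t hst => (hgen hst).2 (hdeg s t hst.le)⟩
end

section
/- Let (P,ρ) be a locally finite weakly ranked poset and let H be an element of I_ρ(P) such that H_{ss}(x) = 1 for all s ∈ P and H_{st}(x) = x^{ρ_{st}−1} H_{st}(1/x) for every s < t. Then there exists a unique (P,ρ)-kernel κ such that H is the Chow function associated to κ; it is given by κ = H^rev · H⁻¹. -/
/-!
Write `h` for `H` as a unit of the algebra `I_ρ(P)`. The symmetry of `H_{st}` around
`(ρ_{st} - 1)/2` says exactly that `h^rev` agrees with `x h` off the diagonal, that is,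
`h^rev = x h - (x - 1) δ`.

Since `rev` is an involutive automorphism of `I_ρ(P)`, the element `κ = h^rev h⁻¹` has inverse
`h (h^rev)⁻¹ = κ^rev`, so it is a kernel. The formula for `h^rev` turns it into
`κ = x δ - (x - 1) h⁻¹`, so its reduced kernel is `-h⁻¹` and its Chow function is `h`.

For uniqueness, any kernel satisfies `κ(1)² = κ(1) κ^rev(1) = δ` with `κ(1)` unipotent over `ℤ`,
hence `κ(1) = δ`. So `x - 1` divides `κ` off the diagonal, and `κ = x δ + (x - 1) κ̄` is recovered
from its reduced kernel `κ̄`, which is minus the inverse of the Chow function.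
-/

open Finset Polynomial
open scoped Classical

namespace ChowKernel

/-! ### Incidence algebras over a ring -/

section IncidenceAlgebra

variable {α R S : Type*} [PartialOrder α]

/-- The element of the incidence algebra that takes the values of `a` on intervals. -/
noncomputable def ofFun [Zero R] (a : α → α → R) : IncidenceAlgebra R α :=
  ⟨fun s t => if s ≤ t then a s t else 0, fun _ _ h => if_neg h⟩

lemma ofFun_apply [Zero R] (a : α → α → R) {s t : α} (hst : s ≤ t) : ofFun a s t = a s t :=
  if_pos hst

lemma ofFun_coe [Zero R] (f : IncidenceAlgebra R α) : ofFun f = f :=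
  IncidenceAlgebra.ext fun _ _ hst => ofFun_apply _ hst

variable [LocallyFiniteOrder α]

lemma interval_induction (s : α) {p : α → Prop}
    (ih : ∀ t, s ≤ t → (∀ w, s ≤ w → w < t → p w) → p t) (t : α) (hst : s ≤ t) : p t := by
  induction hn : #(Icc s t) using Nat.strong_induction_on generalizing t with
  | _ n IH =>
    subst hn
    exact ih t hst fun w hsw hwt =>
      IH _ (card_lt_card (Icc_ssubset_Icc_right hst le_rfl hwt)) w hsw rfl

lemma mul_apply_self [NonUnitalNonAssocSemiring R] (f g : IncidenceAlgebra R α) (s : α) :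
    (f * g) s s = f s s * g s s := by
  rw [IncidenceAlgebra.mul_apply, Icc_self, sum_singleton]

lemma mul_apply_eq_sum_Ico_add [NonUnitalNonAssocSemiring R] (f g : IncidenceAlgebra R α) {s t : α}
    (hst : s ≤ t) : (f * g) s t = ∑ w ∈ Ico s t, f s w * g w t + f s t * g t t :=
  (sum_Ico_add_eq_sum_Icc hst).symm

theorem isRightRegular_of_forall_diag [NonUnitalNonAssocRing R] {g : IncidenceAlgebra R α}
    (hg : ∀ s, IsRightRegular (g s s)) : IsRightRegular g := by
  intro f f' hff'
  ext s t hst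
  refine interval_induction s (p := fun t => f s t = f' s t) (fun t hst ih => ?_) t hst
  have hprefix : ∑ w ∈ Ico s t, f s w * g w t = ∑ w ∈ Ico s t, f' s w * g w t :=
    sum_congr rfl fun w hw => by rw [ih w (mem_Ico.1 hw).1 (mem_Ico.1 hw).2]
  have hmul : (f * g) s t = (f' * g) s t :=
    congrArg (fun k : IncidenceAlgebra R α => k s t) hff'
  rw [mul_apply_eq_sum_Ico_add f g hst, mul_apply_eq_sum_Ico_add f' g hst, hprefix] at hmul
  exact hg t (add_left_cancel hmul)

theorem eq_one_of_mul_self_eq_one [Ring R] (h2 : IsRightRegular (2 : R))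
    {f : IncidenceAlgebra R α} (hdiag : ∀ s, f s s = 1) (hf : f * f = 1) : f = 1 := by
  have hreg : IsRightRegular (f + 1) := isRightRegular_of_forall_diag fun s => by
    rwa [IncidenceAlgebra.add_apply, hdiag, IncidenceAlgebra.one_apply, if_pos rfl,
      one_add_one_eq_two]
  refine hreg ?_
  simp only [mul_add, hf, mul_one, one_mul, add_comm]

/-- The incidence algebra homomorphism that applies `φ` to every value. -/
noncomputable def mapRingHom [Semiring R] [Semiring S] (φ : R →+* S) :
    IncidenceAlgebra R α →+* IncidenceAlgebra S α where
  toFun f := ⟨fun s t => φ (f s t), fun s t h => by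
    rw [IncidenceAlgebra.apply_eq_zero_of_not_le h, map_zero]⟩
  map_zero' := by ext; exact map_zero φ
  map_one' := by ext s t; exact (apply_ite φ _ _ _).trans (by rw [map_one, map_zero]; rfl)
  map_add' f g := by ext; exact map_add φ _ _
  map_mul' f g := by
    ext
    exact (map_sum φ _ _).trans (sum_congr rfl fun _ _ => map_mul φ _ _)

lemma mapRingHom_apply [Semiring R] [Semiring S] (φ : R →+* S) (f : IncidenceAlgebra R α)
    (s t : α) : mapRingHom φ f s t = φ (f s t) := rfl

/-- The values of the left inverse of `f`, solving `∑ w ∈ Icc s t, g s w * f w t = δ s t` for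
`g s t` by recursion on the interval. -/
noncomputable def leftInvFun [Ring R] (f : IncidenceAlgebra R α) (s : α) : α → R
  | t =>
    ((1 : IncidenceAlgebra R α) s t -
      ∑ w ∈ (Ico s t).attach,
        have hw := mem_Ico.1 w.2
        have : #(Icc s w) < #(Icc s t) :=
          card_lt_card (Icc_ssubset_Icc_right (hw.1.trans hw.2.le) le_rfl hw.2)
        leftInvFun f s w * f w t) * Ring.inverse (f t t)
termination_by t => #(Icc s t)

lemma leftInvFun_eq [Ring R] (f : IncidenceAlgebra R α) (s t : α) :
    leftInvFun f s t =
      ((1 : IncidenceAlgebra R α) s t - ∑ w ∈ Ico s t, leftInvFun f s w * f w t) *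
        Ring.inverse (f t t) := by
  rw [leftInvFun, ← sum_attach (Ico s t)]

/-- The left inverse of an element whose diagonal entries are units; the remaining elements get a
junk value. -/
noncomputable def leftInv [Ring R] (f : IncidenceAlgebra R α) : IncidenceAlgebra R α :=
  ⟨leftInvFun f, fun s t h => by
    rw [leftInvFun_eq, IncidenceAlgebra.apply_eq_zero_of_not_le h,
      Ico_eq_empty fun hlt => h hlt.le, sum_empty, sub_zero, zero_mul]⟩

lemma leftInv_mul_cancel [Ring R] {f : IncidenceAlgebra R α} (hf : ∀ s, IsUnit (f s s)) :
    leftInv f * f = 1 := by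
  ext s t hst
  have hsolve : leftInv f s t * f t t =
      (1 : IncidenceAlgebra R α) s t - ∑ w ∈ Ico s t, leftInv f s w * f w t := by
    change leftInvFun f s t * f t t = _
    rw [leftInvFun_eq, mul_assoc, Ring.inverse_mul_cancel _ (hf t), mul_one]
    rfl
  rw [mul_apply_eq_sum_Ico_add _ _ hst, hsolve, add_sub_cancel]

theorem isUnit_of_forall_isUnit_diag [Ring R] {f : IncidenceAlgebra R α}
    (hf : ∀ s, IsUnit (f s s)) : IsUnit f := by
  have hgf : leftInv f * f = 1 := leftInv_mul_cancel hf
  have hreg : IsRightRegular f := isRightRegular_of_forall_diag fun s => (hf s).isRegular.right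
  have hfg : f * leftInv f = 1 := hreg (by simp only [mul_assoc, hgf, mul_one, one_mul])
  exact ⟨⟨f, leftInv f, hfg, hgf⟩, rfl⟩

end IncidenceAlgebra

/-! ### Reflection of polynomials -/

section Reflect

variable {R : Type*} [Semiring R]

lemma reflect_sum {ι : Type*} (N : ℕ) (S : Finset ι) (p : ι → R[X]) :
    (∑ i ∈ S, p i).reflect N = ∑ i ∈ S, (p i).reflect N :=
  map_sum (⟨⟨reflect N, reflect_zero⟩, fun p q => reflect_add p q N⟩ : R[X] →+ R[X]) p S

lemma eval_one_reflect (N : ℕ) (p : R[X]) : (p.reflect N).eval 1 = p.eval 1 := by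
  induction p using Polynomial.induction_on' with
  | add p q hp hq => rw [reflect_add, eval_add, eval_add, hp, hq]
  | monomial n a =>
    rw [← C_mul_X_pow_eq_monomial, reflect_C_mul_X_pow]
    simp only [eval_C_mul, eval_X_pow, one_pow]

lemma reflect_succ_of_polySymm {d : ℕ} {p : ℤ[X]} (hp : PolySymm d p) :
    p.reflect (d + 1) = X * p := by
  have h := reflect_mul p 1 hp.1 (G := 1) (natDegree_one.trans_le zero_le_one)
  rwa [mul_one, hp.2, reflect_one, pow_one, ← X_mul] at h

end Reflect

/-! ### The algebra `I_ρ(P)` and its involution -/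

section RankSubsemiring

variable {α R : Type*} [PartialOrder α] {ρ : α → α → ℕ}

lemma rank_self (hρ : IsWeakRank ρ) (s : α) : ρ s s = 0 :=
  Nat.left_eq_add.1 (hρ.add (le_refl s) (le_refl s))

lemma natDegree_one_apply_le [Semiring R] (N : ℕ) (s t : α) :
    ((1 : IncidenceAlgebra R[X] α) s t).natDegree ≤ N := by
  rw [IncidenceAlgebra.one_apply]
  split_ifs <;> simp

variable [LocallyFiniteOrder α]

lemma natDegree_sum_mul_le [Semiring R] (hρ : IsWeakRank ρ) {f g : α → α → R[X]} {s t : α}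
    {S : Finset α} (hS : S ⊆ Icc s t) (hf : ∀ w ∈ S, (f s w).natDegree ≤ ρ s w)
    (hg : ∀ w ∈ S, (g w t).natDegree ≤ ρ w t) :
    (∑ w ∈ S, f s w * g w t).natDegree ≤ ρ s t := by
  refine natDegree_sum_le_of_forall_le _ _ fun w hw => ?_
  obtain ⟨hsw, hwt⟩ := mem_Icc.1 (hS hw)
  rw [hρ.add hsw hwt]
  exact natDegree_mul_le_of_le (hf w hw) (hg w hw)

/-- The subalgebra `I_ρ(P)` of the incidence algebra with polynomial values. -/
def rankSubsemiring (R : Type*) [Semiring R] (hρ : IsWeakRank ρ) :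
    Subsemiring (IncidenceAlgebra R[X] α) where
  carrier := {f | ∀ ⦃s t⦄, s ≤ t → (f s t).natDegree ≤ ρ s t}
  zero_mem' _ _ _ := natDegree_zero.trans_le (Nat.zero_le _)
  one_mem' s t _ := natDegree_one_apply_le _ s t
  add_mem' hf hg _ _ hst := natDegree_add_le_of_degree_le (hf hst) (hg hst)
  mul_mem' hf hg _ _ _ := natDegree_sum_mul_le hρ subset_rfl (fun _ hw => hf (mem_Icc.1 hw).1)
    fun _ hw => hg (mem_Icc.1 hw).2

lemma mem_rankSubsemiring_of_mul_eq_one [Ring R] {hρ : IsWeakRank ρ}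
    {f g : IncidenceAlgebra R[X] α} (hf : f ∈ rankSubsemiring R hρ) (hdiag : ∀ s, f s s = 1)
    (hgf : g * f = 1) : g ∈ rankSubsemiring R hρ := by
  intro s t hst
  refine interval_induction s (p := fun t => (g s t).natDegree ≤ ρ s t) (fun t hst ih => ?_) t hst
  have hsolve : g s t = (1 : IncidenceAlgebra R[X] α) s t - ∑ w ∈ Ico s t, g s w * f w t := by
    rw [← hgf, mul_apply_eq_sum_Ico_add g f hst, hdiag, mul_one, add_sub_cancel_left]
  have hsum : (∑ w ∈ Ico s t, g s w * f w t).natDegree ≤ ρ s t :=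
    natDegree_sum_mul_le hρ Ico_subset_Icc_self
      (fun w hw => ih w (mem_Ico.1 hw).1 (mem_Ico.1 hw).2) fun w hw => hf (mem_Ico.1 hw).2.le
  rw [hsolve]
  exact (natDegree_sub_le_iff_left hsum).2 (natDegree_one_apply_le _ s t)

theorem isUnit_rankSubsemiring [Ring R] {hρ : IsWeakRank ρ} (f : rankSubsemiring R hρ)
    (hdiag : ∀ s, f.1 s s = 1) : IsUnit f := by
  obtain ⟨u, hu⟩ : IsUnit f.1 :=
    isUnit_of_forall_isUnit_diag fun s => (hdiag s).symm ▸ isUnit_one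
  have hfg : f.1 * (u⁻¹).1 = 1 := by rw [← hu]; exact u.mul_inv
  have hgf : (u⁻¹).1 * f.1 = 1 := by rw [← hu]; exact u.inv_mul
  have hmem : (u⁻¹).1 ∈ rankSubsemiring R hρ :=
    mem_rankSubsemiring_of_mul_eq_one f.2 hdiag hgf
  exact ⟨⟨f, ⟨_, hmem⟩, Subtype.ext hfg, Subtype.ext hgf⟩, rfl⟩

/-- The involution `rev` as an automorphism of `I_ρ(P)`. -/
noncomputable def revEquiv [Semiring R] (hρ : IsWeakRank ρ) :
    rankSubsemiring R hρ ≃+* rankSubsemiring R hρ where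
  toFun f := ⟨⟨fun s t => (f.1 s t).reflect (ρ s t), fun s t h => by
      rw [IncidenceAlgebra.apply_eq_zero_of_not_le h, reflect_zero]⟩,
    fun _ _ hst => natDegree_reflect_le.trans (max_le le_rfl (f.2 hst))⟩
  invFun f := ⟨⟨fun s t => (f.1 s t).reflect (ρ s t), fun s t h => by
      rw [IncidenceAlgebra.apply_eq_zero_of_not_le h, reflect_zero]⟩,
    fun _ _ hst => natDegree_reflect_le.trans (max_le le_rfl (f.2 hst))⟩
  left_inv _ := Subtype.ext <| IncidenceAlgebra.ext fun _ _ _ => reflect_reflect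
  right_inv _ := Subtype.ext <| IncidenceAlgebra.ext fun _ _ _ => reflect_reflect
  map_add' _ _ := Subtype.ext <| IncidenceAlgebra.ext fun _ _ _ => reflect_add _ _ _
  map_mul' f g := Subtype.ext <| IncidenceAlgebra.ext fun s t _ => by
    refine (reflect_sum _ _ _).trans (sum_congr rfl fun w hw => ?_)
    obtain ⟨hsw, hwt⟩ := mem_Icc.1 hw
    rw [hρ.add hsw hwt]
    exact reflect_mul _ _ (f.2 hsw) (g.2 hwt)

lemma revEquiv_revEquiv [Semiring R] {hρ : IsWeakRank ρ} (f : rankSubsemiring R hρ) :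
    revEquiv hρ (revEquiv hρ f) = f :=
  (revEquiv hρ).left_inv f

lemma revEquiv_apply_self [Semiring R] {hρ : IsWeakRank ρ} (f : rankSubsemiring R hρ) (s : α) :
    (revEquiv hρ f).1 s s = f.1 s s := by
  have hdeg : (f.1 s s).natDegree = 0 := Nat.le_zero.1 (rank_self hρ s ▸ f.2 le_rfl)
  change (f.1 s s).reflect (ρ s s) = f.1 s s
  rw [rank_self hρ, eq_C_of_natDegree_eq_zero hdeg, reflect_C, pow_zero, mul_one]

section Unit

variable [Semiring R] {hρ : IsWeakRank ρ} (h : (rankSubsemiring R hρ)ˣ)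

/-- The element `h^rev h⁻¹` of `I_ρ(P)`, which is the kernel attached to a unit `h` of `I_ρ(P)`. -/
noncomputable def revMulInv : rankSubsemiring R hρ :=
  revEquiv hρ h.1 * (h⁻¹).1

lemma revMulInv_mul : revMulInv h * h.1 = revEquiv hρ h.1 :=
  h.inv_mul_cancel_right _

lemma revMulInv_apply_self (s : α) : (revMulInv h).1 s s = 1 := by
  have hmul : (h.1 * (h⁻¹).1).1 s s = 1 := by
    rw [h.mul_inv]
    exact if_pos rfl
  have hdiag : (revMulInv h).1 s s = (revEquiv hρ h.1).1 s s * (h⁻¹).1.1 s s :=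
    mul_apply_self _ _ s
  rw [hdiag, revEquiv_apply_self, ← hmul]
  exact (mul_apply_self _ _ s).symm

lemma revEquiv_revMulInv : revEquiv hρ (revMulInv h) = h.1 * revEquiv hρ (h⁻¹).1 := by
  rw [revMulInv, map_mul, revEquiv_revEquiv]

lemma revEquiv_revMulInv_mul_self : revEquiv hρ (revMulInv h) * revMulInv h = 1 := by
  rw [revEquiv_revMulInv, revMulInv, mul_assoc, ← mul_assoc (revEquiv hρ (h⁻¹).1), ← map_mul,
    h.inv_mul, map_one, one_mul, h.mul_inv]

lemma revMulInv_mul_revEquiv_self : revMulInv h * revEquiv hρ (revMulInv h) = 1 := by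
  rw [revEquiv_revMulInv, ← mul_assoc, revMulInv_mul, ← map_mul, h.mul_inv, map_one]

end Unit

end RankSubsemiring

/-! ### Kernels and Chow functions -/

section Kernel

variable {α : Type*} [PartialOrder α] [LocallyFiniteOrder α] {ρ : α → α → ℕ}
  {κ κ' H : α → α → ℤ[X]}

lemma ofFun_mul_apply (a b : α → α → ℤ[X]) (s t : α) :
    (ofFun a * ofFun b) s t = conv a b s t :=
  sum_congr rfl fun w hw => by
    rw [ofFun_apply _ (mem_Icc.1 hw).1, ofFun_apply _ (mem_Icc.1 hw).2]

lemma isChow_iff :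
    IsChow κ H ↔ ofFun (red κ) * ofFun H = -1 ∧ ofFun H * ofFun (red κ) = -1 := by
  have conv_eq_iff (a b : α → α → ℤ[X]) :
      ofFun a * ofFun b = -1 ↔ ∀ ⦃s t⦄, s ≤ t → conv a b s t = -dlt s t := by
    simp only [← ofFun_mul_apply]
    exact ⟨fun h s t _ => h ▸ rfl, fun h => IncidenceAlgebra.ext fun s t hst => h hst⟩
  rw [conv_eq_iff, conv_eq_iff]
  exact ⟨fun h => ⟨h.left, h.right⟩, fun h => ⟨h.1, h.2⟩⟩

/-- At `x = 1` the identity `κ κ^rev = δ` reads `κ(1)² = δ`. -/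
theorem mapRingHom_eval_one_eq_one (hκ : IsKernel ρ κ) :
    mapRingHom (evalRingHom 1) (ofFun κ) = 1 := by
  refine eq_one_of_mul_self_eq_one ?_ (fun s => ?_) ?_
  · exact (IsRegular.of_ne_zero two_ne_zero).right
  · rw [mapRingHom_apply, ofFun_apply _ le_rfl, hκ.diag, map_one]
  · have hrev : mapRingHom (evalRingHom 1) (ofFun κ) =
        mapRingHom (evalRingHom 1) (ofFun (rev ρ κ)) := by
      ext s t hst
      simp only [mapRingHom_apply, ofFun_apply _ hst, coe_evalRingHom, rev, eval_one_reflect]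
    have hmul : ofFun κ * ofFun (rev ρ κ) = 1 :=
      IncidenceAlgebra.ext fun s t hst => (ofFun_mul_apply _ _ s t).trans (hκ.right hst)
    nth_rw 2 [hrev]
    rw [← map_mul, hmul, map_one]

lemma ofFun_eq_of_isKernel (hκ : IsKernel ρ κ) :
    ofFun κ = (X : ℤ[X]) • 1 + (X - 1 : ℤ[X]) • ofFun (red κ) := by
  ext1 s t hst
  rw [IncidenceAlgebra.add_apply, IncidenceAlgebra.constSMul_apply,
    IncidenceAlgebra.constSMul_apply, ofFun_apply _ hst, ofFun_apply _ hst,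
    IncidenceAlgebra.one_apply, red]
  obtain rfl | hlt := hst.eq_or_lt
  · simp [hκ.diag]
  · have hroot : (κ s t).IsRoot 1 := by
      have h := congrArg (fun f : IncidenceAlgebra ℤ α => f s t) (mapRingHom_eval_one_eq_one hκ)
      simpa only [mapRingHom_apply, ofFun_apply _ hst, IncidenceAlgebra.one_apply,
        if_neg hlt.ne, coe_evalRingHom, IsRoot.def] using h
    rw [if_neg hlt.ne, if_neg hlt.ne, smul_zero, zero_add, smul_eq_mul, ← C_1,
      mul_divByMonic_eq_iff_isRoot.2 hroot]

theorem eq_of_isChow (hκ : IsKernel ρ κ) (hκ' : IsKernel ρ κ') (hc : IsChow κ H)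
    (hc' : IsChow κ' H) {s t : α} (hst : s ≤ t) : κ s t = κ' s t := by
  have hred : -ofFun (red κ) = -ofFun (red κ') := by
    refine left_inv_eq_right_inv (a := ofFun H) ?_ ?_
    · rw [neg_mul (ofFun (red κ)) (ofFun H), (isChow_iff.1 hc).1, neg_neg]
    · rw [mul_neg (ofFun H) (ofFun (red κ')), (isChow_iff.1 hc').2, neg_neg]
  rw [← ofFun_apply κ hst, ← ofFun_apply κ' hst, ofFun_eq_of_isKernel hκ,
    ofFun_eq_of_isKernel hκ', neg_injective hred]

lemma ofFun_red_eq {f g : IncidenceAlgebra ℤ[X] α}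
    (hf : f = (X : ℤ[X]) • 1 + (X - 1 : ℤ[X]) • g) (hg : ∀ s, g s s = -1) :
    ofFun (red f) = g := by
  ext1 s t hst
  rw [ofFun_apply _ hst, red]
  obtain rfl | hlt := hst.eq_or_lt
  · rw [if_pos rfl, hg]
  · have hfst : f s t = (X - C 1) * g s t := by
      rw [hf, IncidenceAlgebra.add_apply, IncidenceAlgebra.constSMul_apply,
        IncidenceAlgebra.constSMul_apply, IncidenceAlgebra.one_apply, if_neg hlt.ne, smul_zero,
        zero_add, smul_eq_mul, C_1]
    rw [if_neg hlt.ne, hfst, ← C_1, mul_divByMonic_cancel_left _ (monic_X_sub_C 1)]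

variable {hρ : IsWeakRank ρ}

lemma revEquiv_eq_of_polySymm (h : rankSubsemiring ℤ hρ) (hdiag : ∀ s, h.1 s s = 1)
    (hsymm : ∀ s t, s < t → PolySymm (ρ s t - 1) (h.1 s t)) :
    (revEquiv hρ h).1 = (X : ℤ[X]) • h.1 - (X - 1 : ℤ[X]) • 1 := by
  ext1 s t hst
  rw [IncidenceAlgebra.sub_apply, IncidenceAlgebra.constSMul_apply,
    IncidenceAlgebra.constSMul_apply, IncidenceAlgebra.one_apply]
  obtain rfl | hlt := hst.eq_or_lt
  · rw [revEquiv_apply_self, hdiag, if_pos rfl, ← sub_smul, sub_sub_cancel, one_smul]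
  · have hreflect := reflect_succ_of_polySymm (hsymm s t hlt)
    rw [Nat.sub_add_cancel (hρ.pos hlt)] at hreflect
    rw [if_neg hlt.ne, smul_zero, sub_zero, smul_eq_mul, ← hreflect]
    rfl

theorem isKernel_revMulInv (h : (rankSubsemiring ℤ hρ)ˣ) : IsKernel ρ (revMulInv h).1 where
  degLE := (revMulInv h).2
  diag := revMulInv_apply_self h
  left s t _ := congrArg (fun k : rankSubsemiring ℤ hρ => k.1 s t) (revEquiv_revMulInv_mul_self h)
  right s t _ := congrArg (fun k : rankSubsemiring ℤ hρ => k.1 s t) (revMulInv_mul_revEquiv_self h)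

theorem isChow_revMulInv (h : (rankSubsemiring ℤ hρ)ˣ) (hdiag : ∀ s, h.1.1 s s = 1)
    (hsymm : ∀ s t, s < t → PolySymm (ρ s t - 1) (h.1.1 s t)) :
    IsChow (revMulInv h).1 h.1.1 := by
  set g : IncidenceAlgebra ℤ[X] α := (h⁻¹).1.1
  have hgh : g * h.1.1 = 1 := congrArg Subtype.val h.inv_mul
  have hhg : h.1.1 * g = 1 := congrArg Subtype.val h.mul_inv
  have hformula : (revMulInv h).1 = (X : ℤ[X]) • 1 + (X - 1 : ℤ[X]) • -g := by
    change (revEquiv hρ h).1 * g = _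
    rw [revEquiv_eq_of_polySymm h.1 hdiag hsymm, sub_mul, smul_mul_assoc, smul_mul_assoc, hhg,
      one_mul, smul_neg (X - 1 : ℤ[X]) g, sub_eq_add_neg]
  have hgdiag (s : α) : (-g) s s = -1 := by
    have hself := mul_apply_self g h.1.1 s
    rw [hgh, hdiag, mul_one, IncidenceAlgebra.one_apply, if_pos rfl] at hself
    rw [IncidenceAlgebra.neg_apply, ← hself]
  rw [isChow_iff, ofFun_red_eq hformula hgdiag, ofFun_coe, neg_mul g h.1.1, mul_neg h.1.1 g,
    hgh, hhg]
  exact ⟨rfl, rfl⟩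

end Kernel

end ChowKernel

open ChowKernel in
/-- Proposition 3.6: if `H ∈ I_ρ(P)` has `H_{ss} = 1` and each `H_{st}` is symmetric with center
`(ρ_{st}-1)/2`, then there exists a unique `(P,ρ)`-kernel `κ` whose Chow function is `H`;
it is given by `κ = H^rev · H⁻¹` (equivalently `κ · H = H^rev`). -/
theorem exists_unique_kernel_of_symmetric [PartialOrder α] [LocallyFiniteOrder α]
    (ρ : α → α → ℕ) (hρ : IsWeakRank ρ)
    (H : α → α → Polynomial ℤ)
    (hdeg : ∀ s t : α, s ≤ t → (H s t).natDegree ≤ ρ s t)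
    (hdiag : ∀ s : α, H s s = 1)
    (hsymm : ∀ s t : α, s < t → PolySymm (ρ s t - 1) (H s t)) :
    ∃ κ : α → α → Polynomial ℤ,
      (IsKernel ρ κ ∧ IsChow κ H ∧
        ∀ s t : α, s ≤ t → conv κ H s t = rev ρ H s t) ∧
      ∀ κ' : α → α → Polynomial ℤ, IsKernel ρ κ' → IsChow κ' H →
        ∀ s t : α, s ≤ t → κ' s t = κ s t := by
  have hofFun (s t : α) (hst : s ≤ t) : ofFun H s t = H s t := ofFun_apply H hst
  let h₀ : rankSubsemiring ℤ hρ := ⟨ofFun H, fun s t hst => hofFun s t hst ▸ hdeg s t hst⟩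
  have hdiag₀ (s : α) : h₀.1 s s = 1 := (hofFun s s le_rfl).trans (hdiag s)
  obtain ⟨h, hh⟩ : IsUnit h₀ := isUnit_rankSubsemiring h₀ hdiag₀
  have hcoe : h.1.1 = ofFun H := congrArg Subtype.val hh
  have hker : IsKernel ρ (revMulInv h).1 := isKernel_revMulInv h
  have hchow : IsChow (revMulInv h).1 H := by
    have hsymm₀ (s t : α) (hst : s < t) : PolySymm (ρ s t - 1) (h.1.1 s t) := by
      rw [hcoe, hofFun s t hst.le]
      exact hsymm s t hst
    have hchow₀ := isChow_revMulInv h (hh ▸ hdiag₀) hsymm₀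
    rwa [isChow_iff, hcoe, ofFun_coe, ← isChow_iff] at hchow₀
  refine ⟨(revMulInv h).1, ⟨hker, hchow, fun s t hst => ?_⟩, fun κ' hκ' hc s t hst =>
    eq_of_isChow hκ' hker hc hchow hst⟩
  rw [← ofFun_mul_apply, ofFun_coe, ← hcoe, rev, ← hofFun s t hst, ← hcoe]
  exact congrArg (fun k : rankSubsemiring ℤ hρ => k.1 s t) (revMulInv_mul h)
end
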